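/- arXiv:1404.4852 — 2 statements merged into one kernel-verified Lean document; each statement's English description precedes it below -/
import Mathlib

section
/- Let r ≥ 1 and let Q be a polynomial of total degree at most 2 in n ≥ 3 variables (x_1, …, x_{n-1}, z) over Z_{2^r}. Then for every natural number v ≤ r and all elements k, g, l ∈ Z_{2^r}, the sum Σ_{j=0}^{2^v - 1} #k_{Q, z = l + g 2^{r-v} j} is divisible by 2^{⌈(r(n-1) + min(2v, r))/2⌉ - 1}. -/
/-!
Lift the polynomial to integer coefficients and let the `i`-th variable run over a range of
multiples of `2 ^ d i`; for `z` this is how the progression `l + g * 2 ^ (r - v) * j` enters. Split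
the points by their residue class `a` modulo `2`. By Hensel lifting along a coordinate in which the
gradient at `a` is odd, the solutions in the class are equidistributed from some modulus `2 ^ p`
on. Modulo `2 ^ p` the gradient at `a` may be treated as even, so that `y ↦ P (a + 2 * y)` has no
zeros or is four times a polynomial of degree at most two, and the modulus drops to `2 ^ (p - 2)`.

The induction ends modulo `2`. There the number of zeros in `m` variables is half of `2 ^ m` plus
a character sum, and the square of that sum is divisible by `2 ^ m`.
-/

open Finset Matrix

/-- A polynomial of degree at most two in the variables `ι`, stored as its coefficients:
`const + ∑ i, lin i * x i + ∑ i, ∑ j, quad i j * x i * x j`. The matrix `quad` is not assumed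
symmetric, because a cross term cannot be halved when `2` is not invertible. -/
structure QuadPoly (ι R : Type*) where
  const : R
  lin : ι → R
  quad : Matrix ι ι R

namespace QuadPoly

variable {ι R S : Type*}

/-- The image of a polynomial of degree at most two under a map of coefficients. -/
def map (P : QuadPoly ι R) (φ : R → S) : QuadPoly ι S where
  const := φ P.const
  lin := φ ∘ P.lin
  quad := P.quad.map φ

theorem exists_map_eq {φ : R → S} (hφ : Function.Surjective φ) (P : QuadPoly ι S) :
    ∃ P' : QuadPoly ι R, P'.map φ = P := by
  obtain ⟨ψ, hψ⟩ := hφ.hasRightInverse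
  refine ⟨P.map ψ, ?_⟩
  simp only [map, Function.comp_def, hψ _, Matrix.map_map, Matrix.map_id']

variable [Fintype ι] [CommRing R] [CommRing S]

/-- The value of a polynomial of degree at most two at a point. -/
def eval (P : QuadPoly ι R) (x : ι → R) : R :=
  P.const + P.lin ⬝ᵥ x + x ⬝ᵥ P.quad *ᵥ x

/-- The gradient of a polynomial of degree at most two at a point. -/
def grad (P : QuadPoly ι R) (a : ι → R) : ι → R :=
  P.lin + (P.quad + P.quadᵀ) *ᵥ a

/-- The polynomial `y ↦ P (a + w * y)`, where the product is coordinatewise. -/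
def subst (P : QuadPoly ι R) (a w : ι → R) : QuadPoly ι R where
  const := P.eval a
  lin := w * P.grad a
  quad := .of fun i j => w i * P.quad i j * w j

theorem eval_add (P : QuadPoly ι R) (a x : ι → R) :
    P.eval (a + x) = P.eval a + P.grad a ⬝ᵥ x + x ⬝ᵥ P.quad *ᵥ x := by
  have hcross : a ⬝ᵥ P.quad *ᵥ x = (P.quadᵀ *ᵥ a) ⬝ᵥ x := by
    rw [dotProduct_mulVec, mulVec_transpose]
  simp only [eval, grad, mulVec_add, dotProduct_add, add_dotProduct, add_mulVec, hcross,
    dotProduct_comm x (P.quad *ᵥ a)]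
  ring

theorem eval_subst (P : QuadPoly ι R) (a w y : ι → R) :
    (P.subst a w).eval y = P.eval (a + w * y) := by
  rw [eval_add]
  simp only [eval, subst, dotProduct, mulVec, Pi.mul_apply, of_apply, mul_sum]
  congr! 3 with i _ i _ j _ <;> ring

theorem eval_subst_two (P : QuadPoly ι R) (a x : ι → R) :
    (P.subst a 2).eval x = P.eval a + 2 * (P.grad a ⬝ᵥ x) + 4 * (x ⬝ᵥ P.quad *ᵥ x) := by
  have hsmul : (2 * x : ι → R) = (2 : R) • x := rfl
  rw [eval_subst, eval_add, hsmul, mulVec_smul, dotProduct_smul, dotProduct_smul, smul_dotProduct]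
  simp only [smul_eq_mul]
  ring

theorem grad_add_two_mul (P : QuadPoly ι R) (a x : ι → R) (i : ι) :
    P.grad (a + 2 * x) i = P.grad a i + 2 * ((P.quad + P.quadᵀ) *ᵥ x) i := by
  have hsmul : (2 * x : ι → R) = (2 : R) • x := rfl
  simp only [grad, hsmul, mulVec_add, mulVec_smul, Pi.add_apply, Pi.smul_apply, smul_eq_mul]
  ring

theorem eval_add_single [DecidableEq ι] (P : QuadPoly ι R) (a : ι → R) (i : ι) (t : R) :
    P.eval (a + Pi.single i t) = P.eval a + P.grad a i * t + P.quad i i * t ^ 2 := by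
  rw [eval_add, dotProduct_single, single_dotProduct, mulVec, dotProduct_single]
  ring

theorem eval_map (P : QuadPoly ι R) (φ : R →+* S) (x : ι → R) :
    (P.map φ).eval (φ ∘ x) = φ (P.eval x) := by
  simp only [eval, map, map_add, RingHom.map_dotProduct]
  congr 2
  funext i
  exact (RingHom.map_mulVec φ P.quad x i).symm

theorem exists_eval_eq_mul_prod {m : Multiset ι} (hm : m.card ≤ 2) (r : R) :
    ∃ P : QuadPoly ι R, ∀ x, r * (m.map x).prod = P.eval x := by
  classical
  interval_cases h : m.card
  · obtain rfl := Multiset.card_eq_zero.1 h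
    exact ⟨⟨r, 0, 0⟩, fun x => by simp [eval]⟩
  · obtain ⟨i, rfl⟩ := Multiset.card_eq_one.1 h
    exact ⟨⟨0, Pi.single i r, 0⟩, fun x => by simp [eval]⟩
  · obtain ⟨i, j, rfl⟩ := Multiset.card_eq_two.1 h
    refine ⟨⟨0, 0, .single i j r⟩, fun x => ?_⟩
    have hsingle : single i j r *ᵥ x = Pi.single i (r * x j) := single_mulVec i j r x
    simp only [Multiset.insert_eq_cons, Multiset.map_cons, Multiset.map_singleton,
      Multiset.prod_cons, Multiset.prod_singleton, eval, zero_dotProduct, add_zero, hsingle,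
      dotProduct_single, zero_add]
    ring

theorem exists_eval_eq_of_totalDegree_le_two {Q : MvPolynomial ι R} (hQ : Q.totalDegree ≤ 2) :
    ∃ P : QuadPoly ι R, ∀ x, MvPolynomial.eval x Q = P.eval x := by
  classical
  have hmonomial (d : ι →₀ ℕ) (x : ι → R) :
      (d.toMultiset.map x).prod = ∏ i ∈ d.support, x i ^ d i := by
    rw [Finsupp.toMultiset_map, Finsupp.prod_toMultiset,
      Finsupp.prod_mapDomain_index (by simp) (by simp [pow_add]), Finsupp.prod]
  suffices ∃ P : QuadPoly ι R, ∀ x,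
      (∑ d ∈ Q.support, fun x : ι → R => Q.coeff d * (d.toMultiset.map x).prod) x = P.eval x by
    simpa only [MvPolynomial.eval_eq, hmonomial, Finset.sum_apply] using this
  refine sum_induction _ (fun f : (ι → R) → R => ∃ P : QuadPoly ι R, ∀ x, f x = P.eval x) ?_ ?_ ?_
  · rintro f g ⟨P, hP⟩ ⟨P', hP'⟩
    refine ⟨⟨P.const + P'.const, P.lin + P'.lin, P.quad + P'.quad⟩, fun x => ?_⟩
    simp only [Pi.add_apply, hP, hP', eval, add_dotProduct, add_mulVec, dotProduct_add]
    ring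
  · exact ⟨⟨0, 0, 0⟩, fun x => by simp [eval]⟩
  · intro d hd
    refine exists_eval_eq_mul_prod ?_ _
    rw [Finsupp.card_toMultiset]
    exact (MvPolynomial.le_totalDegree hd).trans hQ

end QuadPoly

section CharacterSums

variable {V : Type*} [AddCommGroup V] [Fintype V] {f : V → ZMod 2}

/- Squaring the sum and substituting `y = x + h` leaves, for each `h`, the sum of a character of
`V` over all of `V`, and such a sum is `0` or `#V`. -/
theorem card_dvd_sum_addChar_sq (χ : AddChar (ZMod 2) ℤ)
    (hf : ∀ h, ∃ (φ : V →+ ZMod 2) (c : ZMod 2), ∀ x, f (x + h) = f x + φ x + c) :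
    (Fintype.card V : ℤ) ∣ (∑ x, χ (f x)) ^ 2 := by
  have hexpand : (∑ x, χ (f x)) ^ 2 = ∑ h, ∑ x, χ (f x + f (x + h)) := by
    rw [sq, sum_mul_sum, sum_comm (s := univ) (t := univ)]
    simp only [AddChar.map_add_eq_mul]
    rw [sum_comm]
    conv_rhs => rw [sum_comm]
    exact sum_congr rfl fun x _ =>
      (Equiv.sum_comp (Equiv.addLeft x) fun y => χ (f x) * χ (f y)).symm
  rw [hexpand]
  refine dvd_sum fun h _ => ?_
  obtain ⟨φ, c, hφ⟩ := hf h
  have hterm (x : V) : χ (f x + f (x + h)) = χ c * χ.compAddMonoidHom φ x := by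
    rw [hφ, AddChar.compAddMonoidHom_apply, ← AddChar.map_add_eq_mul, ← add_assoc, ← add_assoc,
      CharTwo.add_self_eq_zero, zero_add, add_comm]
  classical
  simp only [hterm, ← mul_sum, AddChar.sum_eq_ite]
  refine Dvd.dvd.mul_left ?_ _
  split_ifs
  · rfl
  · exact dvd_zero _

theorem two_pow_dvd_card_filter_eq_zero
    (hf : ∀ h, ∃ (φ : V →+ ZMod 2) (c : ZMod 2), ∀ x, f (x + h) = f x + φ x + c)
    {k m : ℕ} (hcard : Fintype.card V = 2 ^ m) (hk : 2 * k + 1 ≤ m) :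
    2 ^ k ∣ #{x | f x = 0} := by
  let χ : AddChar (ZMod 2) ℤ := AddChar.zmodChar 2 (ζ := -1) (by norm_num)
  have hcount : 2 * (#{x | f x = 0} : ℤ) = 2 ^ m + ∑ x, χ (f x) := by
    have hindicator (t : ZMod 2) : 2 * (if t = 0 then 1 else 0) = 1 + χ t := by
      fin_cases t <;> rfl
    simp only [card_filter, Nat.cast_sum, Nat.cast_ite, Nat.cast_one, Nat.cast_zero, mul_sum,
      hindicator, sum_add_distrib, sum_const, card_univ, hcard, nsmul_one, Nat.cast_pow,
      Nat.cast_ofNat]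
  have hdvd : (2 : ℤ) ^ (k + 1) ∣ ∑ x, χ (f x) := by
    have hsq : (2 : ℤ) ^ (2 * k + 1) ∣ (∑ x, χ (f x)) ^ 2 := by
      refine (pow_dvd_pow 2 hk).trans ?_
      exact_mod_cast hcard ▸ card_dvd_sum_addChar_sq χ hf
    obtain ⟨c, hc⟩ : (2 : ℤ) ^ k ∣ ∑ x, χ (f x) := by
      rw [← Int.pow_dvd_pow_iff two_ne_zero, ← pow_mul, mul_comm]
      exact (pow_dvd_pow 2 (Nat.le_succ _)).trans hsq
    rw [hc, pow_succ, mul_dvd_mul_iff_left (by positivity)]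
    rw [hc, mul_pow, pow_succ, ← pow_mul, mul_comm 2 k,
      mul_dvd_mul_iff_left (by positivity)] at hsq
    exact Int.prime_two.dvd_of_dvd_pow hsq
  have htwice : (2 : ℤ) ^ (k + 1) ∣ 2 * #{x | f x = 0} :=
    hcount ▸ dvd_add (pow_dvd_pow 2 (by omega)) hdvd
  rw [pow_succ', mul_dvd_mul_iff_left two_ne_zero] at htwice
  exact_mod_cast htwice

end CharacterSums

section Box

variable {ι : Type*} [Fintype ι] [DecidableEq ι]

/-- The integer points `x` with `0 ≤ x i < 2 ^ N i` for all `i`. -/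
noncomputable def dyadicBox (N : ι → ℕ) : Finset (ι → ℤ) :=
  Fintype.piFinset fun i => Ico 0 (2 ^ N i)

theorem mem_dyadicBox {N : ι → ℕ} {x : ι → ℤ} : x ∈ dyadicBox N ↔ ∀ i, 0 ≤ x i ∧ x i < 2 ^ N i := by
  simp [dyadicBox]

theorem card_dyadicBox (N : ι → ℕ) : #(dyadicBox N) = 2 ^ ∑ i, N i := by
  simp [dyadicBox, Fintype.card_piFinset, prod_pow_eq_pow_sum, Int.toNat_pow_of_nonneg]

theorem sum_dyadicBox_add {M : Type*} [AddCommMonoid M] (n N : ι → ℕ) (f : (ι → ℤ) → M) :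
    ∑ x ∈ dyadicBox (n + N), f x =
      ∑ a ∈ dyadicBox n, ∑ y ∈ dyadicBox N, f fun i => a i + 2 ^ n i * y i := by
  rw [← sum_product']
  symm
  refine sum_nbij' (fun p i => p.1 i + 2 ^ n i * p.2 i)
    (fun x => (fun i => x i % 2 ^ n i, fun i => x i / 2 ^ n i)) ?_ ?_ ?_ ?_ ?_
  · simp only [mem_product, mem_dyadicBox, Pi.add_apply, pow_add]
    rintro ⟨a, y⟩ ⟨ha, hy⟩ i
    have hpos : (0 : ℤ) < 2 ^ n i := by positivity
    obtain ⟨ha₀, ha₁⟩ := ha i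
    obtain ⟨hy₀, hy₁⟩ := hy i
    constructor
    · positivity
    · nlinarith
  · simp only [mem_product, mem_dyadicBox, Pi.add_apply, pow_add]
    refine fun x hx => ⟨fun i => ⟨Int.emod_nonneg _ (by positivity),
      Int.emod_lt_of_pos _ (by positivity)⟩, fun i => ⟨Int.ediv_nonneg (hx i).1 (by positivity),
      Int.ediv_lt_of_lt_mul (by positivity) ?_⟩⟩
    rw [mul_comm]
    exact (hx i).2
  · simp only [mem_product, mem_dyadicBox]
    rintro ⟨a, y⟩ ⟨ha, -⟩
    ext i
    · simp [Int.emod_eq_of_lt (ha i).1 (ha i).2]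
    · simp [Int.add_mul_ediv_left, Int.ediv_eq_zero_of_lt (ha i).1 (ha i).2]
  · intro x _
    funext i
    exact Int.emod_add_mul_ediv _ _
  · intros
    rfl

theorem sum_dyadicBox_update {M : Type*} [AddCommMonoid M] (N : ι → ℕ) (i : ι) (f : (ι → ℤ) → M) :
    ∑ y ∈ dyadicBox N, ∑ t ∈ Ico 0 (2 ^ N i), f (Function.update y i t) =
      2 ^ N i • ∑ y ∈ dyadicBox N, f y := by
  have hconst : 2 ^ N i • ∑ y ∈ dyadicBox N, f y =
      ∑ y ∈ dyadicBox N, ∑ _t ∈ Ico (0 : ℤ) (2 ^ N i), f y := by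
    simp [smul_sum, Int.toNat_pow_of_nonneg]
  rw [hconst, ← sum_product', ← sum_product']
  refine sum_nbij' (fun p => (Function.update p.1 i p.2, p.1 i))
    (fun p => (Function.update p.1 i p.2, p.1 i)) ?_ ?_ (by simp) (by simp) (by simp) <;>
  · simp only [mem_product, mem_dyadicBox, mem_Ico]
    rintro ⟨y, t⟩ ⟨hy, ht⟩
    exact ⟨Function.forall_update_iff y (fun j a => 0 ≤ a ∧ a < 2 ^ N j) |>.2
      ⟨ht, fun j _ => hy j⟩, hy i⟩

theorem card_dyadicBox_filter_intCast {n : ι → ℕ} (hn : ∀ i, n i ≤ 1)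
    (p : (ι → ZMod 2) → Prop) [DecidablePred p]
    [Fintype (AddSubgroup.pi {i | n i = 0} fun _ => (⊥ : AddSubgroup (ZMod 2)))] :
    #{a ∈ dyadicBox n | p fun i => a i} =
      #{x : AddSubgroup.pi {i | n i = 0} fun _ => (⊥ : AddSubgroup (ZMod 2)) | p x} := by
  have hbit {i : ι} {b : ℤ} : 0 ≤ b ∧ b < 2 ^ n i ↔ b = 0 ∨ b = 1 ∧ n i ≠ 0 := by
    rcases Nat.le_one_iff_eq_zero_or_eq_one.1 (hn i) with h | h <;> simp [h] <;> omega
  refine card_bij' (fun a ha => ⟨fun i => a i, ?_⟩) (fun x _ i => ((x : ι → ZMod 2) i).val)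
    ?_ ?_ ?_ ?_
  · intro i hi
    have := hbit.1 (mem_dyadicBox.1 (mem_filter.1 ha).1 i)
    simp_all
  · simp
  · intro x hx
    refine mem_filter.2 ⟨mem_dyadicBox.2 fun i => hbit.2 ?_, by simpa using hx⟩
    rcases eq_or_ne (n i) 0 with h | h
    · have : (x : ι → ZMod 2) i = 0 := x.2 i h
      simp [this]
    · have := ZMod.val_lt ((x : ι → ZMod 2) i)
      omega
  · intro a ha
    funext i
    rcases hbit.1 (mem_dyadicBox.1 (mem_filter.1 ha).1 i) with h | ⟨h, -⟩ <;> simp [h, ZMod.val_one]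
  · intro x _
    ext i
    simp

theorem two_pow_dvd_card_dyadicBox_filter_two_dvd (P : QuadPoly ι ℤ) {n : ι → ℕ}
    (hn : ∀ i, n i ≤ 1) {k : ℕ} (hk : 2 * k + 1 ≤ ∑ i, n i) :
    2 ^ k ∣ #{a ∈ dyadicBox n | 2 ∣ P.eval a} := by
  classical
  let V : AddSubgroup (ι → ZMod 2) := AddSubgroup.pi {i | n i = 0} fun _ => ⊥
  have hcard : Fintype.card V = 2 ^ ∑ i, n i := by
    rw [← card_dyadicBox, ← card_univ]
    simpa using (card_dyadicBox_filter_intCast hn fun _ => True).symm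
  set F := P.map (Int.castRingHom (ZMod 2))
  have heven (a : ι → ℤ) : 2 ∣ P.eval a ↔ F.eval (fun i => (a i : ZMod 2)) = 0 :=
    (ZMod.intCast_zmod_eq_zero_iff_dvd _ 2).symm.trans
      (P.eval_map (Int.castRingHom (ZMod 2)) a).congr_left.symm
  simp only [heven]
  rw [card_dyadicBox_filter_intCast hn fun x => F.eval x = 0]
  refine two_pow_dvd_card_filter_eq_zero (fun h => ?_) hcard hk
  let L : V →+ ZMod 2 := AddMonoidHom.mk' (fun x => (F.grad h - F.lin) ⬝ᵥ (x : ι → ZMod 2))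
    fun x y => dotProduct_add _ _ _
  refine ⟨L, F.eval h - F.const, fun x => ?_⟩
  simp only [AddSubgroup.coe_add, add_comm (x : ι → ZMod 2), QuadPoly.eval_add, L,
    AddMonoidHom.mk'_apply, sub_dotProduct]
  simp only [QuadPoly.eval]
  ring

end Box

section Hensel

theorem card_Ico_filter_dvd_of_sub_eq {f : ℤ → ℤ}
    (hf : ∀ u u', ∃ c, Odd c ∧ f u - f u' = (u - u') * c) {t N : ℕ} (ht : t ≤ N) :
    #{u ∈ Ico 0 (2 ^ N) | 2 ^ t ∣ f u} = 2 ^ (N - t) := by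
  have hpos : (0 : ℤ) < 2 ^ N := by positivity
  have hinj : Set.InjOn (fun u => f u % 2 ^ N) (Ico (0 : ℤ) (2 ^ N)) := by
    intro u hu u' hu' h
    obtain ⟨c, hc, hsub⟩ := hf u u'
    have hcop : IsCoprime ((2 : ℤ) ^ N) c := (Int.isCoprime_two_left.2 hc).pow_left
    have hdvd : (2 : ℤ) ^ N ∣ u - u' := hcop.dvd_of_dvd_mul_right (hsub ▸ Int.ModEq.dvd h.symm)
    rw [coe_Ico, Set.mem_Ico] at hu hu'
    rwa [← Int.modEq_iff_dvd, Int.ModEq, Int.emod_eq_of_lt hu'.1 hu'.2,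
      Int.emod_eq_of_lt hu.1 hu.2, eq_comm] at hdvd
  have himage : (Ico (0 : ℤ) (2 ^ N)).image (fun u => f u % 2 ^ N) = Ico 0 (2 ^ N) := by
    refine eq_of_subset_of_card_le (image_subset_iff.2 fun u _ => mem_Ico.2
      ⟨Int.emod_nonneg _ hpos.ne', Int.emod_lt_of_pos _ hpos⟩) ?_
    rw [card_image_of_injOn hinj]
  have hdvd (u : ℤ) : 2 ^ t ∣ f u ↔ 2 ^ t ∣ f u % 2 ^ N :=
    (EuclideanDomain.dvd_mod_iff (pow_dvd_pow 2 ht)).symm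
  have hmultiples := Int.Ico_filter_dvd_card 0 (2 ^ N) (r := 2 ^ t) (by positivity)
  have hdiv : ((2 ^ N : ℤ) : ℚ) / (2 ^ t : ℤ) = ((2 ^ (N - t) : ℕ) : ℚ) := by
    push_cast
    rw [pow_sub₀ _ two_ne_zero ht, div_eq_mul_inv]
  simp only [hdvd]
  rw [← card_image_of_injOn (hinj.mono (filter_subset _ _)), ← filter_image, himage]
  rw [hdiv, Int.ceil_natCast, Int.cast_zero, zero_div, Int.ceil_zero, sub_zero,
    max_eq_left (by positivity)] at hmultiples
  exact_mod_cast hmultiples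

theorem two_pow_mul_card_Ico_filter_dvd {f : ℤ → ℤ} {p : ℕ}
    (hf : ∀ u u', ∃ c, Odd c ∧ f u - f u' = 2 ^ p * ((u - u') * c)) {k N : ℕ} (hk : k ≤ N) :
    2 ^ k * #{u ∈ Ico 0 (2 ^ N) | 2 ^ (p + k) ∣ f u} = #{u ∈ Ico 0 (2 ^ N) | 2 ^ p ∣ f u} := by
  have hp (u : ℤ) : 2 ^ p ∣ f u ↔ 2 ^ p ∣ f 0 := by
    obtain ⟨c, -, hc⟩ := hf u 0
    exact dvd_iff_dvd_of_dvd_sub ⟨_, hc⟩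
  by_cases h0 : 2 ^ p ∣ f 0
  · choose h hh using fun u => (hp u).2 h0
    have hsub (u u' : ℤ) : ∃ c, Odd c ∧ h u - h u' = (u - u') * c := by
      obtain ⟨c, hc, hsub⟩ := hf u u'
      rw [hh, hh, ← mul_sub] at hsub
      exact ⟨c, hc, mul_left_cancel₀ (by positivity) hsub⟩
    have hcount := card_Ico_filter_dvd_of_sub_eq hsub hk
    have hall : #{u ∈ Ico 0 (2 ^ N) | 2 ^ p ∣ f u} = 2 ^ N := by
      rw [filter_true_of_mem fun u _ => (hp u).2 h0]
      simp [Int.toNat_pow_of_nonneg]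
    have hiff (u : ℤ) : 2 ^ (p + k) ∣ f u ↔ 2 ^ k ∣ h u := by
      rw [hh, pow_add, mul_dvd_mul_iff_left (by positivity)]
    simp only [hiff, hall, hcount]
    rw [← pow_add, Nat.add_sub_cancel' hk]
  · have hnot (u : ℤ) : ¬ 2 ^ (p + k) ∣ f u := fun h =>
      h0 ((hp u).1 ((pow_dvd_pow 2 (Nat.le_add_right p k)).trans h))
    simp [hnot, hp, h0]

variable {ι : Type*} [Fintype ι] [DecidableEq ι]

theorem two_pow_mul_card_dyadicBox_filter_dvd {G : (ι → ℤ) → ℤ} {N : ι → ℕ} {i : ι} {k p : ℕ}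
    (hG : ∀ y t t', ∃ c, Odd c ∧
      G (Function.update y i t) - G (Function.update y i t') = 2 ^ p * ((t - t') * c))
    (hk : k ≤ N i) :
    2 ^ k * #{y ∈ dyadicBox N | 2 ^ (p + k) ∣ G y} = #{y ∈ dyadicBox N | 2 ^ p ∣ G y} := by
  refine Nat.eq_of_mul_eq_mul_left (pow_pos two_pos (N i)) ?_
  simp only [card_filter, ← smul_eq_mul (2 ^ N i)]
  rw [← smul_eq_mul, smul_comm]
  rw [← sum_dyadicBox_update N i fun y => if 2 ^ (p + k) ∣ G y then 1 else 0]
  rw [← sum_dyadicBox_update N i fun y => if 2 ^ p ∣ G y then 1 else 0]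
  simp only [← card_filter, smul_eq_mul]
  rw [mul_sum]
  exact sum_congr rfl fun y _ => two_pow_mul_card_Ico_filter_dvd (hG y) hk

end Hensel

theorem sum_tsub_two_mul_add_le {ι : Type*} [Fintype ι] {d : ι → ℕ} (hd : 2 ≤ ∑ i, (1 - d) i)
    (q k : ℕ) :
    ∑ i, (q - 2 * (d - 1) i) + 2 * k + 2 * ∑ i, (1 - d) i ≤ ∑ i, (q + 2 + k - 2 * d i) := by
  have hterm : ∑ i, (q - 2 * (d - 1) i) + (k + 2) * ∑ i, (1 - d) i ≤
      ∑ i, (q + 2 + k - 2 * d i) := by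
    rw [mul_sum, ← sum_add_distrib]
    refine sum_le_sum fun i _ => ?_
    simp only [Pi.sub_apply, Pi.one_apply]
    rcases Nat.eq_zero_or_pos (d i) with h | (h : 1 ≤ d i)
    · rw [h]
      omega
    · rw [Nat.sub_eq_zero_of_le h]
      omega
  have := Nat.mul_le_mul_left k hd
  linarith

namespace QuadPoly

variable {ι : Type*} [Fintype ι] [DecidableEq ι]

/-- The solutions of `P x ≡ 0` modulo `2 ^ s` at points `x` whose `i`-th coordinate is a multiple
`2 ^ d i * y i`, recorded as the points `y`, which are confined to a box. -/
noncomputable def solutions (P : QuadPoly ι ℤ) (d N : ι → ℕ) (s : ℕ) : Finset (ι → ℤ) :=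
  {y ∈ dyadicBox N | 2 ^ s ∣ P.eval fun i => 2 ^ d i * y i}

/- With truncated subtraction `1 - d` is the indicator function of `d i = 0`, so only the variables
not already restricted to even values are split into residue classes modulo `2`. -/
theorem card_solutions_eq_sum (P : QuadPoly ι ℤ) {d N : ι → ℕ} (hN : 1 - d ≤ N) (s : ℕ) :
    #(P.solutions d N s) =
      ∑ a ∈ dyadicBox (1 - d), #((P.subst a 2).solutions (d - 1) (N - (1 - d)) s) := by
  have hpoint (a) (ha : a ∈ dyadicBox (1 - d)) (y : ι → ℤ) :
      (fun i => 2 ^ d i * (a i + 2 ^ (1 - d) i * y i)) =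
        a + 2 * fun i => 2 ^ (d - 1) i * y i := by
    funext i
    have hai := mem_dyadicBox.1 ha i
    rcases h : d i with _ | b
    · simp [h]
    · have hone : (1 - d) i = 0 := by simp [h]
      have hzero : a i = 0 := by
        rw [hone] at hai
        omega
      simp only [hone, hzero, h, Pi.add_apply, Pi.mul_apply, Pi.sub_apply, Pi.ofNat_apply,
        add_tsub_cancel_right]
      ring
  simp only [solutions, card_filter, eval_subst]
  conv_lhs => rw [← add_tsub_cancel_of_le hN, sum_dyadicBox_add]
  exact sum_congr rfl fun a ha => sum_congr rfl fun y _ => by rw [hpoint a ha]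

theorem card_solutions_subst_two_one (P : QuadPoly ι ℤ) (a : ι → ℤ) (d N : ι → ℕ) :
    #((P.subst a 2).solutions d N 1) = if 2 ∣ P.eval a then 2 ^ ∑ i, N i else 0 := by
  have heven (x : ι → ℤ) : 2 ∣ (P.subst a 2).eval x ↔ 2 ∣ P.eval a := by
    rw [eval_subst_two, add_assoc, dvd_add_left]
    exact dvd_add (dvd_mul_right _ _) (Dvd.dvd.mul_right (by norm_num) _)
  simp only [solutions, pow_one, heven]
  split_ifs with h <;> simp [h, card_dyadicBox]

theorem two_pow_mul_card_solutions_subst_two (P : QuadPoly ι ℤ) {a : ι → ℤ} {d N : ι → ℕ} {i : ι}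
    (hodd : Odd (P.grad a i)) {k : ℕ} (hk : k ≤ N i) :
    2 ^ k * #((P.subst a 2).solutions d N (d i + 1 + k)) =
      #((P.subst a 2).solutions d N (d i + 1)) := by
  refine two_pow_mul_card_dyadicBox_filter_dvd (fun y t t' => ?_) hk
  let x (t : ℤ) : ι → ℤ := fun j => 2 ^ d j * Function.update y i t j
  have hx : a + 2 * x t = (a + 2 * x t') + Pi.single i (2 ^ (d i + 1) * (t - t')) := by
    funext j
    rcases eq_or_ne j i with rfl | hj
    · simp only [x, Pi.add_apply, Pi.mul_apply, Pi.ofNat_apply, Function.update_self,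
        Pi.single_eq_same]
      ring
    · simp [x, hj]
  refine ⟨P.grad (a + 2 * x t') i + P.quad i i * (2 ^ (d i + 1) * (t - t')), ?_, ?_⟩
  · rw [grad_add_two_mul]
    exact (hodd.add_even (even_two_mul _)).add_even (by simp [pow_succ, Int.even_mul])
  · rw [eval_subst, eval_subst, hx, eval_add_single]
    ring

theorem solutions_subst_two_eq_empty_or (P : QuadPoly ι ℤ) {a : ι → ℤ} {d : ι → ℕ} {q : ℕ}
    (hd : ∀ i, Odd (P.grad a i) → q + 1 ≤ d i) (N : ι → ℕ) :
    (P.subst a 2).solutions d N (q + 2) = ∅ ∨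
      ∃ P' : QuadPoly ι ℤ, (P.subst a 2).solutions d N (q + 2) = P'.solutions d N q := by
  let x (y : ι → ℤ) : ι → ℤ := fun i => 2 ^ d i * y i
  have hlin (y : ι → ℤ) :
      2 ^ (q + 1) ∣ P.grad a ⬝ᵥ x y - 2 * ((fun i => P.grad a i / 2) ⬝ᵥ x y) := by
    simp only [dotProduct, mul_sum, ← sum_sub_distrib, ← mul_assoc, ← sub_mul]
    refine dvd_sum fun i _ => ?_
    rcases Int.even_or_odd (P.grad a i) with heven | hodd
    · rw [Int.two_mul_ediv_two_of_even heven, sub_self, zero_mul]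
      exact dvd_zero _
    · exact ((pow_dvd_pow 2 (hd i hodd)).mul_right _).mul_left _
  have heval (y : ι → ℤ) : 2 ^ (q + 2) ∣ (P.subst a 2).eval (x y) ↔ 2 ^ (q + 2) ∣ P.eval a +
      4 * ((fun i => P.grad a i / 2) ⬝ᵥ x y + x y ⬝ᵥ P.quad *ᵥ x y) := by
    obtain ⟨c, hc⟩ := hlin y
    refine dvd_iff_dvd_of_dvd_sub ⟨c, ?_⟩
    rw [eval_subst_two, sub_eq_iff_eq_add.1 hc]
    ring
  have hfour : (2 : ℤ) ^ (q + 2) = 4 * 2 ^ q := by ring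
  by_cases hdvd : 4 ∣ P.eval a
  · obtain ⟨b, hb⟩ := hdvd
    refine .inr ⟨⟨b, fun i => P.grad a i / 2, P.quad⟩, filter_congr fun y _ => ?_⟩
    rw [heval, hb, ← mul_add, hfour, mul_dvd_mul_iff_left four_ne_zero, ← add_assoc]
    rfl
  · refine .inl (filter_eq_empty_iff.2 fun y _ h => hdvd ?_)
    rw [heval, hfour] at h
    exact (dvd_add_left (dvd_mul_right _ _)).1 (dvd_of_mul_right_dvd h)

theorem exists_two_pow_mul_card_solutions_subst_two (P : QuadPoly ι ℤ) (a : ι → ℤ) {d N : ι → ℕ}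
    {s : ℕ} (hs : 1 ≤ s) (hN : ∀ i, s ≤ N i + (d i + 1)) :
    ∃ p, 1 ≤ p ∧ p ≤ s ∧ (∀ i, Odd (P.grad a i) → p ≤ d i + 1) ∧
      2 ^ (s - p) * #((P.subst a 2).solutions d N s) = #((P.subst a 2).solutions d N p) := by
  by_cases h : ∃ i, Odd (P.grad a i) ∧ d i + 1 < s
  · obtain ⟨j, hj⟩ := h
    obtain ⟨i, hi, hmin⟩ := exists_min_image {i | Odd (P.grad a i)} d ⟨j, by simpa using hj.1⟩
    simp only [mem_filter_univ] at hi hmin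
    have hle := hmin j hj.1
    have hNi := hN i
    refine ⟨d i + 1, by omega, by omega, fun j hj => by gcongr; exact hmin j hj, ?_⟩
    have hlift := P.two_pow_mul_card_solutions_subst_two (d := d) (N := N) hi
      (k := s - (d i + 1)) (by omega)
    rwa [Nat.add_sub_cancel' (by omega)] at hlift
  · push Not at h
    exact ⟨s, hs, le_rfl, h, by simp⟩

theorem two_pow_dvd_card_solutions_subst_two (P : QuadPoly ι ℤ) (a : ι → ℤ) {d N : ι → ℕ}
    {s e : ℕ} (hs : 1 ≤ s) (hN : ∀ i, s ≤ N i + (d i + 1)) (he : s + e ≤ ∑ i, N i + 1)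
    (ih : ∀ q k, q + 2 + k = s → ∀ P' : QuadPoly ι ℤ, 2 ^ (k + e) ∣ #(P'.solutions d N q)) :
    2 ^ e ∣ #((P.subst a 2).solutions d N s) := by
  obtain ⟨p, hp, hps, hodd, hcount⟩ := P.exists_two_pow_mul_card_solutions_subst_two a hs hN
  suffices 2 ^ (s - p + e) ∣ #((P.subst a 2).solutions d N p) by
    rwa [← hcount, pow_add, mul_dvd_mul_iff_left (by positivity)] at this
  obtain rfl | ⟨q, rfl⟩ : p = 1 ∨ ∃ q, p = q + 2 :=
    (eq_or_ne p 1).imp_right fun h => ⟨p - 2, by omega⟩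
  · rw [card_solutions_subst_two_one]
    split_ifs
    · exact pow_dvd_pow 2 (by omega)
    · exact dvd_zero _
  · obtain hempty | ⟨P', hP'⟩ := P.solutions_subst_two_eq_empty_or
      (fun i hi => Nat.succ_le_succ_iff.1 (hodd i hi)) N
    · simp [hempty]
    · exact hP' ▸ ih q (s - (q + 2)) (by omega) P'

theorem two_pow_dvd_card_solutions_one (P : QuadPoly ι ℤ) {d N : ι → ℕ} {e : ℕ}
    (hN : 1 - d ≤ N) (he : 2 * e + 1 ≤ ∑ i, (1 - d) i + 2 * ∑ i, (N - (1 - d)) i) :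
    2 ^ e ∣ #(P.solutions d N 1) := by
  simp only [card_solutions_eq_sum P hN, card_solutions_subst_two_one]
  rw [← sum_filter, sum_const, smul_eq_mul]
  rcases le_total e (∑ i, (N - (1 - d)) i) with h | h
  · exact (pow_dvd_pow 2 h).mul_left _
  · obtain ⟨k, rfl⟩ := Nat.exists_eq_add_of_le' h
    rw [pow_add]
    refine mul_dvd_mul_right (two_pow_dvd_card_dyadicBox_filter_two_dvd P (fun i => ?_) ?_) _
    · exact Nat.sub_le 1 (d i)
    · omega

theorem two_pow_dvd_card_solutions (P : QuadPoly ι ℤ) {d N : ι → ℕ} {s e : ℕ}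
    (hd : 2 ≤ ∑ i, (1 - d) i) (hN : ∀ i, s ≤ N i + d i)
    (he : 2 * e + 1 + ∑ i, (s - 2 * d i) ≤ 2 * ∑ i, N i) :
    2 ^ e ∣ #(P.solutions d N s) := by
  induction s using Nat.strong_induction_on generalizing P d N e with
  | _ s ih =>
  obtain rfl | hs := Nat.eq_zero_or_pos s
  · simp only [solutions, pow_zero, one_dvd, filter_true, card_dyadicBox]
    exact pow_dvd_pow 2 (by omega)
  have hN₁ : 1 - d ≤ N := fun i => tsub_le_iff_right.2 (le_trans hs (hN i))
  have hsum : ∑ i, N i = ∑ i, (1 - d) i + ∑ i, (N - (1 - d)) i := by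
    rw [← sum_add_distrib]
    exact sum_congr rfl fun i _ => (add_tsub_cancel_of_le (hN₁ i)).symm
  obtain rfl | ⟨t, rfl⟩ : s = 1 ∨ ∃ t, s = 0 + 2 + t :=
    (eq_or_ne s 1).imp_right fun h => ⟨s - 2, by omega⟩
  · have : ∑ i, (1 - 2 * d i) = ∑ i, (1 - d) i := sum_congr rfl fun i _ => by
      simp only [Pi.sub_apply, Pi.one_apply]
      omega
    exact two_pow_dvd_card_solutions_one P hN₁ (by omega)
  have hN' (i : ι) : 0 + 2 + t ≤ (N - (1 - d)) i + ((d - 1) i + 1) := by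
    have := hN i
    simp only [Pi.sub_apply, Pi.one_apply]
    omega
  rw [card_solutions_eq_sum P hN₁]
  refine dvd_sum fun a _ => P.two_pow_dvd_card_solutions_subst_two a hs hN' ?_ ?_
  · have := sum_tsub_two_mul_add_le hd 0 t
    omega
  · intro q k hq P'
    have := sum_tsub_two_mul_add_le hd q k
    refine ih q (by omega) P' (hd.trans (sum_le_sum fun i _ => ?_)) (fun i => ?_) ?_
    · simp only [Pi.sub_apply, Pi.one_apply]
      omega
    · have := hN' i
      omega
    · rw [hq] at this
      omega

end QuadPoly

theorem sum_card_eq_card_dyadicBox_filter {m r v : ℕ} (p : (Fin m → ZMod (2 ^ r)) → ℤ → Prop)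
    [∀ x b, Decidable (p x b)] :
    ∑ j : Fin (2 ^ v), Nat.card {x // p x j} =
      #{y ∈ dyadicBox (Fin.snoc (fun _ : Fin m => r) v) |
        p (fun i => y i.castSucc) (y (Fin.last m))} := by
  have hbox {y : Fin (m + 1) → ℤ} : y ∈ dyadicBox (Fin.snoc (fun _ : Fin m => r) v) ↔
      (∀ i : Fin m, 0 ≤ y i.castSucc ∧ y i.castSucc < 2 ^ r) ∧
        0 ≤ y (Fin.last m) ∧ y (Fin.last m) < 2 ^ v := by
    simp [mem_dyadicBox, Fin.forall_fin_succ']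
  simp only [Nat.card_eq_fintype_card, Fintype.card_subtype]
  rw [← card_sigma]
  refine card_bij' (fun q _ => Fin.snoc (fun i => ((q.2 i).val : ℤ)) q.1)
    (fun y hy => ⟨⟨(y (Fin.last m)).toNat, ?_⟩, fun i => y i.castSucc⟩) ?_ ?_ ?_ ?_
  · have := (hbox.1 (mem_filter.1 hy).1).2
    zify
    omega
  · rintro ⟨j, x⟩ hx
    have hval (i : Fin m) : ((x i).val : ℤ) < 2 ^ r := by exact_mod_cast ZMod.val_lt (x i)
    have hj : ((j : ℕ) : ℤ) < 2 ^ v := by exact_mod_cast j.2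
    have hx₀ (i : Fin m) : (0 : ℤ) ≤ (x i).val := Int.natCast_nonneg _
    simp_all
  · intro y hy
    obtain ⟨hy, hp⟩ := mem_filter.1 hy
    have := (hbox.1 hy).2.1
    simp [this, hp]
  · rintro ⟨j, x⟩ _
    simp
  · intro y hy
    obtain ⟨hinit, hlast⟩ := hbox.1 (mem_filter.1 hy).1
    funext i
    refine i.lastCases ?_ fun i => ?_
    · simp [hlast.1]
    · simp [ZMod.coe_intCast, Int.emod_eq_of_lt (hinit i).1 (hinit i).2]

theorem QuadPoly.exists_two_pow_dvd_eval_iff {ι : Type*} [Fintype ι] {r : ℕ}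
    (P : QuadPoly ι (ZMod (2 ^ r))) (a w : ι → ZMod (2 ^ r)) (k : ZMod (2 ^ r)) :
    ∃ P' : QuadPoly ι ℤ, ∀ y : ι → ℤ,
      2 ^ r ∣ P'.eval y ↔ P.eval (fun i => a i + w i * y i) = k := by
  let P₀ : QuadPoly ι (ZMod (2 ^ r)) := ⟨P.eval a - k, (P.subst a w).lin, (P.subst a w).quad⟩
  obtain ⟨P', hP'⟩ := exists_map_eq (φ := Int.castRingHom (ZMod (2 ^ r))) ZMod.intCast_surjective P₀
  refine ⟨P', fun y => ?_⟩
  have hP₀ (x) : P₀.eval x = P.eval (a + w * x) - k := by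
    rw [← eval_subst]
    simp only [eval, subst, P₀]
    ring
  have hdvd := ZMod.intCast_zmod_eq_zero_iff_dvd (P'.eval y) (2 ^ r)
  push_cast at hdvd
  rw [← hdvd, ← eq_intCast (Int.castRingHom (ZMod (2 ^ r))), ← eval_map, hP', hP₀, sub_eq_zero]
  rfl

theorem QuadPoly.exists_sum_card_eq_card_solutions {m r : ℕ}
    (P : QuadPoly (Fin (m + 1)) (ZMod (2 ^ r))) (k g l : ZMod (2 ^ r)) (v c : ℕ) :
    ∃ P' : QuadPoly (Fin (m + 1)) ℤ,
      ∑ j : Fin (2 ^ v), Nat.card {x : Fin m → ZMod (2 ^ r) //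
        P.eval (Fin.snoc x (l + g * 2 ^ c * ((j : ℕ) : ZMod (2 ^ r)))) = k} =
      #(P'.solutions (Fin.snoc 0 c) (Fin.snoc (fun _ => r) v) r) := by
  classical
  obtain ⟨P', hP'⟩ := P.exists_two_pow_dvd_eval_iff (Fin.snoc 0 l) (Fin.snoc 1 g) k
  refine ⟨P', ?_⟩
  have hcount := sum_card_eq_card_dyadicBox_filter (v := v)
    fun (x : Fin m → ZMod (2 ^ r)) (b : ℤ) => P.eval (Fin.snoc x (l + g * 2 ^ c * b)) = k
  simp only [Int.cast_natCast] at hcount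
  rw [hcount]
  refine congrArg card (filter_congr fun y _ => ?_)
  rw [hP']
  congr! 2
  funext i
  refine i.lastCases ?_ fun i => ?_
  · simp [mul_assoc]
  · simp

/-- Corollary (a): restricting `z` to a coset: the sum `∑_{j<2^v} #k_{Q, z=l+g2^{r-v}j}`
is divisible by `2^{⌈(r(n-1)+min(2v,r))/2⌉-1}`. -/
theorem stmt_5 (r : ℕ) (hr : 1 ≤ r) (n : ℕ) (hn : 3 ≤ n)
    (Q : MvPolynomial (Fin n) (ZMod (2 ^ r))) (hQ : Q.totalDegree ≤ 2)
    (v : ℕ) (hv : v ≤ r) (k g l : ZMod (2 ^ r)) :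
    (2 ^ ((r * (n - 1) + min (2 * v) r + 1) / 2 - 1) : ℕ) ∣
    ∑ j : Fin (2 ^ v),
      Nat.card {x : Fin (n - 1) → ZMod (2 ^ r) //
        MvPolynomial.eval
          (fun t : Fin n => if h : (t : ℕ) < n - 1 then x ⟨t, h⟩
            else l + g * (2 : ZMod (2 ^ r)) ^ (r - v) * ((j : ℕ) : ZMod (2 ^ r))) Q
          = k} := by
  obtain ⟨m, rfl⟩ : ∃ m, n = m + 1 := ⟨n - 1, by omega⟩
  obtain ⟨P, hP⟩ := QuadPoly.exists_eval_eq_of_totalDegree_le_two hQ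
  obtain ⟨P', hP'⟩ := P.exists_sum_card_eq_card_solutions k g l v (r - v)
  simp only [hP]
  refine (P'.two_pow_dvd_card_solutions ?_ ?_ ?_).trans hP'.symm.dvd
  · simp only [Fin.sum_univ_castSucc, Pi.sub_apply, Pi.one_apply, Fin.snoc_castSucc, Pi.zero_apply,
      tsub_zero, sum_const, card_univ, Fintype.card_fin, smul_eq_mul, mul_one, Fin.snoc_last]
    omega
  · simp only [Fin.forall_fin_succ', Fin.snoc_castSucc, Fin.snoc_last, Pi.zero_apply, add_zero,
      le_refl, implies_true, true_and]
    omega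
  · have hrm : 1 * 2 ≤ r * m := Nat.mul_le_mul hr (by omega)
    simp only [Fin.sum_univ_castSucc, Fin.snoc_castSucc, Fin.snoc_last, Pi.zero_apply, mul_zero,
      tsub_zero, sum_const, card_univ, Fintype.card_fin, smul_eq_mul, add_tsub_cancel_right,
      mul_comm m]
    omega
end

section
/- Let r ≥ 1 and let d ≤ v ≤ r be natural numbers. Let a_x, b_x, c, a_y, b_y, l_x, l_y ∈ Z_{2^r}, and define P(x) = a_x x^2 + b_x x + c and Q(y, h) = a_y y^2 + b_y y + 2^{r-d} h. Then 2^{v+d} divides the number of triples of natural numbers (j_x, j_y, j_h) with j_x < 2^v, j_y < 2^v, j_h < 2^d such that P(l_x + 2^{r-v} j_x) = Q(l_y + 2^{r-v} j_y, j_h) holds in Z_{2^r}. -/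
/-!
Since `2 ^ (r - d) * h` runs exactly once through the multiples of `2 ^ (r - d)`, the triples
correspond to the pairs `(x, y)` in a box of side `2 ^ v` at which `P(x) - Q(y, 0)` vanishes
modulo `2 ^ (r - d)`. On the box, this difference is a constant plus `2 ^ (r - v)` times a
quadratic polynomial `q` without cross term. Either the constant is not divisible by `2 ^ (r - v)`
and there are no solutions, or it is absorbed into `q` and the solutions are the zeros of `q`
modulo `2 ^ (v - d)`.

For a polynomial `q = a x² + b x + a' y² + b' y + c`, substitute `(2x + i, 2y + j)` with
`i, j ∈ {0, 1}`. If `b` and `b'` are even, then `q (2x + i, 2y + j) - q (i, j)` is four times a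
polynomial of the same shape, which lowers the exponent of the modulus by two. If `b'` is odd, then
`q (2x + i, 2y + j) - q (i, j)` is twice a polynomial that permutes the residues modulo powers of
two in the variable `y`, so all the pairs `(i, j)` with `q (i, j)` even contribute the same number
of zeros; the number of these pairs is even because `q` is affine modulo two.
-/

open Finset

/-- Injectivity of an integer function on residues modulo `M`, used to make the function hit every
residue once per block of `M` consecutive integers. It is stated without requiring that `F` descend
to a map of residues. -/
def InjectiveMod (M : ℕ) (F : ℤ → ℤ) : Prop :=
  ∀ ⦃x y : ℤ⦄, F x ≡ F y [ZMOD M] → x ≡ y [ZMOD M]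

theorem InjectiveMod.const_add {M : ℕ} {F : ℤ → ℤ} (hF : InjectiveMod M F) (t : ℤ) :
    InjectiveMod M fun x ↦ t + F x :=
  fun _ _ h ↦ hF (h.add_left_cancel' t)

theorem InjectiveMod.comp_const_add {M : ℕ} {F : ℤ → ℤ} (hF : InjectiveMod M F) (t : ℤ) :
    InjectiveMod M fun x ↦ F (t + x) :=
  fun _ _ h ↦ (hF h).add_left_cancel' t

theorem injectiveMod_const_sub (M : ℕ) (t : ℤ) : InjectiveMod M fun x ↦ t - x :=
  fun _ _ h ↦ by simpa only [sub_sub_cancel] using (Int.ModEq.refl t).sub h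

theorem InjectiveMod.card_filter_dvd {M : ℕ} [NeZero M] {F : ℤ → ℤ} (hF : InjectiveMod M F) :
    #{x : Fin M | (M : ℤ) ∣ F x} = 1 := by
  have injective : Function.Injective fun x : Fin M ↦ (F x : ZMod M) := fun x y hxy ↦ by
    have hmod := Int.natCast_modEq_iff.1 (hF ((ZMod.intCast_eq_intCast_iff _ _ _).1 hxy))
    exact Fin.ext (hmod.eq_of_lt_of_lt x.isLt y.isLt)
  have bijective := (Fintype.bijective_iff_injective_and_card _).2 ⟨injective, by simp⟩
  refine (Fintype.existsUnique_iff_card_one _).1 ?_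
  simpa only [ZMod.intCast_zmod_eq_zero_iff_dvd] using bijective.existsUnique 0

theorem sum_fin_mul {A : Type*} [AddCommMonoid A] (N k : ℕ) (f : ℤ → A) :
    ∑ x : Fin (N * k), f x = ∑ i : Fin k, ∑ x : Fin N, f (k * x + i) := by
  rw [← finProdFinEquiv.sum_comp, Fintype.sum_prod_type_right]
  simp [add_comm]

theorem InjectiveMod.card_filter_fin_mul_dvd {M : ℕ} [NeZero M] {F : ℤ → ℤ}
    (hF : InjectiveMod M F) (n : ℕ) : #{x : Fin (n * M) | (M : ℤ) ∣ F x} = n := by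
  have block (q : Fin n) : #{x : Fin M | (M : ℤ) ∣ F (M * q + x)} = 1 :=
    (hF.comp_const_add (M * q)).card_filter_dvd
  rw [card_filter, sum_fin_mul n M fun x ↦ if (M : ℤ) ∣ F x then 1 else 0, sum_comm]
  simp only [← card_filter, block, sum_const, card_univ, Fintype.card_fin, smul_eq_mul, mul_one]

theorem card_filter_mul_dvd_sub_mul {K D : ℕ} [NeZero K] [NeZero D] (H : ℤ) :
    #{h : Fin D | ((K * D : ℕ) : ℤ) ∣ H - K * (h : ℕ)} = if (K : ℤ) ∣ H then 1 else 0 := by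
  have hK : (K : ℤ) ≠ 0 := NeZero.ne _
  split_ifs with hH
  · obtain ⟨T, rfl⟩ := hH
    simp only [Nat.cast_mul, ← mul_sub, mul_dvd_mul_iff_left hK]
    exact (injectiveMod_const_sub D T).card_filter_dvd
  · refine card_eq_zero.2 (filter_eq_empty_iff.2 fun h _ hdvd ↦ hH ?_)
    rw [Nat.cast_mul] at hdvd
    exact (dvd_sub_left (dvd_mul_right _ _)).1 (dvd_of_mul_right_dvd hdvd)

/-- The number of zeros modulo `M` of `f` in the box `0 ≤ x, y < N`. The side `N` need not be
related to `M`, so that the box can be split into residue classes independently of the modulus. -/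
def zeroCount (N M : ℕ) (f : ℤ → ℤ → ℤ) : ℕ :=
  #{p : Fin N × Fin N | (M : ℤ) ∣ f p.1 p.2}

theorem zeroCount_eq_sum (N M : ℕ) (f : ℤ → ℤ → ℤ) :
    zeroCount N M f = ∑ x : Fin N, ∑ y : Fin N, if (M : ℤ) ∣ f x y then 1 else 0 := by
  simp only [zeroCount, card_filter, Fintype.sum_prod_type]

theorem zeroCount_one_right (N : ℕ) (f : ℤ → ℤ → ℤ) : zeroCount N 1 f = N ^ 2 := by
  simp [zeroCount, sq]

theorem zeroCount_swap (N M : ℕ) (f : ℤ → ℤ → ℤ) :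
    zeroCount N M (fun x y ↦ f y x) = zeroCount N M f := by
  simp only [zeroCount_eq_sum]
  exact sum_comm

theorem zeroCount_mul_left (N k M : ℕ) (f : ℤ → ℤ → ℤ) :
    zeroCount (N * k) M f =
      ∑ i : Fin k, ∑ j : Fin k, zeroCount N M fun x y ↦ f (k * x + i) (k * y + j) := by
  have split_y (x : ℤ) := sum_fin_mul N k fun y ↦ if (M : ℤ) ∣ f x y then 1 else 0
  have split_x := sum_fin_mul N k fun x ↦
    ∑ j : Fin k, ∑ y : Fin N, if (M : ℤ) ∣ f x (k * y + j) then 1 else 0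
  simp only [zeroCount_eq_sum, split_y, split_x]
  exact sum_congr rfl fun i _ ↦ sum_comm

theorem zeroCount_mul_add {k : ℕ} [NeZero k] (N M : ℕ) (f : ℤ → ℤ → ℤ) (t : ℤ) :
    zeroCount N (k * M) (fun x y ↦ k * f x y + t) =
      if (k : ℤ) ∣ t then zeroCount N M fun x y ↦ f x y + t / k else 0 := by
  have hk : (k : ℤ) ≠ 0 := NeZero.ne _
  split_ifs with ht
  · obtain ⟨T, rfl⟩ := ht
    simp only [zeroCount, Nat.cast_mul, ← mul_add, mul_dvd_mul_iff_left hk,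
      Int.mul_ediv_cancel_left _ hk]
  · refine card_eq_zero.2 (filter_eq_empty_iff.2 fun p _ hdvd ↦ ht ?_)
    rw [Nat.cast_mul] at hdvd
    exact (dvd_add_right (dvd_mul_right _ _)).1 (dvd_of_mul_right_dvd hdvd)

theorem dvd_zeroCount_mul_add {k N M K : ℕ} [NeZero k] {f : ℤ → ℤ → ℤ}
    (h : ∀ t, K ∣ zeroCount N M fun x y ↦ f x y + t) (t : ℤ) :
    K ∣ zeroCount N (k * M) fun x y ↦ k * f x y + t := by
  rw [zeroCount_mul_add]
  split_ifs
  exacts [h _, dvd_zero K]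

theorem InjectiveMod.zeroCount_add {M : ℕ} [NeZero M] {F : ℤ → ℤ} (hF : InjectiveMod M F) (n : ℕ)
    (g : ℤ → ℤ) : zeroCount (n * M) M (fun x y ↦ g x + F y) = n ^ 2 * M := by
  have column (x : Fin (n * M)) : #{y : Fin (n * M) | (M : ℤ) ∣ g x + F y} = n :=
    (hF.const_add (g x)).card_filter_fin_mul_dvd n
  simp only [zeroCount_eq_sum, ← card_filter, column, sum_const, card_univ, Fintype.card_fin,
    smul_eq_mul]
  ring

theorem natCard_intCast_eq_mul_eq_zeroCount {R K D : ℕ} [NeZero K] [NeZero D] (hR : R = K * D)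
    (N : ℕ) (f : ℤ → ℤ → ℤ) :
    Nat.card {t : Fin N × Fin N × Fin D //
      (f (t.1 : ℕ) (t.2.1 : ℕ) : ZMod R) = (K : ZMod R) * ((t.2.2 : ℕ) : ZMod R)} =
      zeroCount N K f := by
  have equation_iff (H : ℤ) (h : ℕ) :
      (H : ZMod R) = (K : ZMod R) * (h : ZMod R) ↔ ((K * D : ℕ) : ℤ) ∣ H - K * h := by
    rw [← hR, ← ZMod.intCast_zmod_eq_zero_iff_dvd, ← sub_eq_zero]
    push_cast
    rfl
  simp only [equation_iff, Nat.card_eq_fintype_card, Fintype.card_subtype, card_filter,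
    Fintype.sum_prod_type, zeroCount_eq_sum]
  simp only [← card_filter, card_filter_mul_dvd_sub_mul]

/-- The quadratic polynomial functions in two variables without cross term `x y`, a class stable
under affine substitutions in each variable. -/
def diagQuadratic (a b a' b' c x y : ℤ) : ℤ :=
  a * x ^ 2 + b * x + (a' * y ^ 2 + b' * y) + c

section

variable (a b a' b' c : ℤ)

theorem diagQuadratic_zero_add (x y : ℤ) :
    diagQuadratic a b a' b' 0 x y + c = diagQuadratic a b a' b' c x y := by
  simp only [diagQuadratic, add_zero]

theorem diagQuadratic_mul_add (k i j x y : ℤ) :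
    diagQuadratic a b a' b' c (k * x + i) (k * y + j) =
      k * diagQuadratic (k * a) (2 * a * i + b) (k * a') (2 * a' * j + b') 0 x y +
        diagQuadratic a b a' b' c i j := by
  simp only [diagQuadratic]
  ring

theorem diagQuadratic_two_mul_add_of_even (i j x y : ℤ) :
    diagQuadratic a (2 * b) a' (2 * b') c (2 * x + i) (2 * y + j) =
      4 * diagQuadratic a (a * i + b) a' (a' * j + b') 0 x y +
        diagQuadratic a (2 * b) a' (2 * b') c i j := by
  simp only [diagQuadratic]
  ring

theorem zeroCount_diagQuadratic_swap (N M : ℕ) :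
    zeroCount N M (diagQuadratic a' b' a b c) = zeroCount N M (diagQuadratic a b a' b' c) := by
  rw [← zeroCount_swap]
  congr 1
  funext x y
  simp only [diagQuadratic]
  ring

theorem two_dvd_zeroCount_two_two_diagQuadratic :
    2 ∣ zeroCount 2 2 (diagQuadratic a b a' b' c) := by
  simp only [zeroCount_eq_sum, diagQuadratic, Fin.sum_univ_two, Fin.val_zero, Fin.val_one]
  push_cast
  split_ifs <;> omega

end

theorem injectiveMod_two_pow_quadratic {a b : ℤ} (ha : Even a) (hb : Odd b) (w : ℕ) :
    InjectiveMod (2 ^ w) fun x ↦ a * x ^ 2 + b * x := by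
  intro x y h
  have factor : (a * y ^ 2 + b * y) - (a * x ^ 2 + b * x) = (y - x) * (a * (y + x) + b) := by ring
  have odd_cofactor : Odd (a * (y + x) + b) := (ha.mul_right _).add_odd hb
  have coprime : IsCoprime (2 ^ w : ℤ) (a * (y + x) + b) :=
    (Int.isCoprime_two_left.2 odd_cofactor).pow_left
  rw [Int.modEq_iff_dvd, factor] at h
  push_cast at h
  rw [Int.modEq_iff_dvd]
  exact_mod_cast coprime.dvd_of_dvd_mul_right h

theorem zeroCount_diagQuadratic_of_even_of_odd {a' b' : ℤ} (ha' : Even a') (hb' : Odd b') (n w : ℕ)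
    (a b c : ℤ) :
    zeroCount (n * 2 ^ w) (2 ^ w) (diagQuadratic a b a' b' c) = n ^ 2 * 2 ^ w := by
  rw [← (injectiveMod_two_pow_quadratic ha' hb' w).zeroCount_add n fun x ↦ a * x ^ 2 + b * x + c]
  congr 1
  funext x y
  simp only [diagQuadratic]
  ring

theorem mul_two_dvd_zeroCount_diagQuadratic_of_forall {N M K : ℕ} {a b a' b' : ℤ}
    (h : ∀ i j c : ℤ, zeroCount N M
      (diagQuadratic (2 * a) (2 * a * i + b) (2 * a') (2 * a' * j + b') c) = K) (c : ℤ) :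
    K * 2 ∣ zeroCount (N * 2) (2 * M) (diagQuadratic a b a' b' c) := by
  have count_eq : zeroCount (N * 2) (2 * M) (diagQuadratic a b a' b' c) =
      K * zeroCount 2 2 (diagQuadratic a b a' b' c) := by
    simp only [zeroCount_mul_left, Nat.cast_ofNat, diagQuadratic_mul_add]
    have class_count (i j : Fin 2) := zeroCount_mul_add (k := 2) N M
      (diagQuadratic (2 * a) (2 * a * i + b) (2 * a') (2 * a' * j + b') 0)
      (diagQuadratic a b a' b' c i j)
    simp only [diagQuadratic_zero_add, h, Nat.cast_ofNat] at class_count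
    simp only [class_count, zeroCount_eq_sum, mul_sum, mul_ite, mul_one, mul_zero, Nat.cast_ofNat]
  exact count_eq ▸ mul_dvd_mul_left K (two_dvd_zeroCount_two_two_diagQuadratic a b a' b' c)

theorem dvd_zeroCount_diagQuadratic_of_odd {b' : ℤ} (hb' : Odd b') (n w : ℕ) (a b a' c : ℤ) :
    n ^ 2 * 2 ^ (w + 1) ∣
      zeroCount (n * 2 ^ (w + 1)) (2 ^ (w + 1)) (diagQuadratic a b a' b' c) := by
  have shifted_odd (j : ℤ) : Odd (2 * a' * j + b') :=
    ((even_two_mul a').mul_right j).add_odd hb'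
  rw [pow_succ 2 w, ← mul_assoc, ← mul_assoc, mul_comm (2 ^ w) 2]
  exact mul_two_dvd_zeroCount_diagQuadratic_of_forall (fun i j c ↦
    zeroCount_diagQuadratic_of_even_of_odd (even_two_mul a') (shifted_odd j) n w _ _ c) c

theorem dvd_zeroCount_diagQuadratic_of_even {N M K : ℕ} {a a' : ℤ}
    (h : ∀ b b' c, K ∣ zeroCount N M (diagQuadratic a b a' b' c)) (b b' c : ℤ) :
    K ∣ zeroCount (N * 2) (4 * M) (diagQuadratic a (2 * b) a' (2 * b') c) := by
  simp only [zeroCount_mul_left, Nat.cast_ofNat, diagQuadratic_two_mul_add_of_even]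
  refine dvd_sum fun i _ ↦ dvd_sum fun j _ ↦ dvd_zeroCount_mul_add (k := 4) (fun t ↦ ?_) _
  simp only [diagQuadratic_zero_add, h]

theorem dvd_zeroCount_diagQuadratic (n w : ℕ) (a b a' b' c : ℤ) :
    n ^ 2 * 2 ^ w ∣ zeroCount (n * 2 ^ w) (2 ^ w) (diagQuadratic a b a' b' c) := by
  induction w using Nat.twoStepInduction generalizing n b b' c with
  | zero => simp [zeroCount_one_right]
  | one =>
    exact mul_two_dvd_zeroCount_diagQuadratic_of_forall (M := 1)
      (fun _ _ _ ↦ zeroCount_one_right n _) c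
  | more w ih _ =>
    rcases Int.even_or_odd' b' with ⟨β', rfl | hb'⟩
    · rcases Int.even_or_odd' b with ⟨β, rfl | hb⟩
      · have bound_eq : n ^ 2 * 2 ^ (w + 2) = (n * 2) ^ 2 * 2 ^ w := by ring
        have side_eq : n * 2 ^ (w + 2) = n * 2 * 2 ^ w * 2 := by ring
        have modulus_eq : 2 ^ (w + 2) = 4 * 2 ^ w := by ring
        rw [bound_eq, side_eq, modulus_eq]
        exact dvd_zeroCount_diagQuadratic_of_even (ih (n * 2)) β β' c
      · rw [← zeroCount_diagQuadratic_swap]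
        exact dvd_zeroCount_diagQuadratic_of_odd ⟨β, hb⟩ n (w + 1) a' _ a c
    · exact dvd_zeroCount_diagQuadratic_of_odd ⟨β', hb'⟩ n (w + 1) a b a' c

theorem dvd_zeroCount_diagQuadratic_mul_add {s : ℕ} [NeZero s] (n w : ℕ) (a b a' b' c i j : ℤ) :
    n ^ 2 * 2 ^ w ∣ zeroCount (n * 2 ^ w) (s * 2 ^ w)
      fun x y ↦ diagQuadratic a b a' b' c (s * x + i) (s * y + j) := by
  simp only [diagQuadratic_mul_add]
  refine dvd_zeroCount_mul_add (fun t ↦ ?_) _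
  simpa only [diagQuadratic_zero_add] using dvd_zeroCount_diagQuadratic _ _ _ _ _ _ t

/-- For `P(x) = aₓx² + bₓx + c` and `Q(y,h) = a_y y² + b_y y + 2^{r-d} h` over `ℤ/2^r`
with `d ≤ v ≤ r`, the number of triples `(jₓ, j_y, j_h)` with `jₓ, j_y < 2^v`,
`j_h < 2^d` and `P(lₓ + 2^{r-v} jₓ) = Q(l_y + 2^{r-v} j_y, j_h)` is divisible by
`2^{v+d}`. -/
theorem stmt_16 (r d v : ℕ) (hr : 1 ≤ r) (hdv : d ≤ v) (hv : v ≤ r)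
    (aX bX c aY bY lX lY : ZMod (2 ^ r)) :
    (2 ^ (v + d) : ℕ) ∣
    Nat.card {t : Fin (2 ^ v) × Fin (2 ^ v) × Fin (2 ^ d) //
      aX * (lX + (2 : ZMod (2 ^ r)) ^ (r - v) * ((t.1 : ℕ) : ZMod (2 ^ r))) ^ 2
        + bX * (lX + (2 : ZMod (2 ^ r)) ^ (r - v) * ((t.1 : ℕ) : ZMod (2 ^ r))) + c
      = aY * (lY + (2 : ZMod (2 ^ r)) ^ (r - v) * ((t.2.1 : ℕ) : ZMod (2 ^ r))) ^ 2
        + bY * (lY + (2 : ZMod (2 ^ r)) ^ (r - v) * ((t.2.1 : ℕ) : ZMod (2 ^ r)))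
        + (2 : ZMod (2 ^ r)) ^ (r - d) * ((t.2.2 : ℕ) : ZMod (2 ^ r))} := by
  obtain ⟨aX, rfl⟩ := ZMod.intCast_surjective aX
  obtain ⟨bX, rfl⟩ := ZMod.intCast_surjective bX
  obtain ⟨c, rfl⟩ := ZMod.intCast_surjective c
  obtain ⟨aY, rfl⟩ := ZMod.intCast_surjective aY
  obtain ⟨bY, rfl⟩ := ZMod.intCast_surjective bY
  obtain ⟨lX, rfl⟩ := ZMod.intCast_surjective lX
  obtain ⟨lY, rfl⟩ := ZMod.intCast_surjective lY
  have ring_modulus_eq : 2 ^ r = 2 ^ (r - d) * 2 ^ d := (pow_sub_mul_pow 2 (hdv.trans hv)).symm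
  have modulus_eq : 2 ^ (r - d) = 2 ^ (r - v) * 2 ^ (v - d) := by rw [← pow_add]; congr 1; omega
  have side_eq : 2 ^ v = 2 ^ d * 2 ^ (v - d) := (pow_mul_pow_sub 2 hdv).symm
  have divisor_eq : 2 ^ (v + d) = (2 ^ d) ^ 2 * 2 ^ (v - d) := by rw [pow_add, side_eq]; ring
  have count_dvd := dvd_zeroCount_diagQuadratic_mul_add (s := 2 ^ (r - v)) (2 ^ d) (v - d)
    aX bX (-aY) (-bY) c lX lY
  rw [← divisor_eq, ← side_eq, ← modulus_eq,
    ← natCard_intCast_eq_mul_eq_zeroCount ring_modulus_eq] at count_dvd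
  convert count_dvd using 1
  refine Nat.card_congr (Equiv.subtypeEquivRight fun t ↦ ?_)
  simp only [diagQuadratic]
  push_cast
  constructor <;> intro h <;> linear_combination h
end
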